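/- Let F be a finite type, m : F → F → ℕ a symmetric function, and b : F → ℕ. For g : F → ℝ define the killed Dirichlet energy E(g) := (1/2) Σ_{u ∈ F} Σ_{v ∈ F} m u v * (g u − g v)^2 + Σ_{v ∈ F} b v * (g v)^2, and when F is nonempty define μ̃₁(F, m, b) := sInf { E(g) / Σ_{v ∈ F} (g v)^2 : g : F → ℝ, g not identically zero }. Let W ⊆ F be a nonempty subset, and define the restricted network on W by m_W := the restriction of m to W × W and b_W(v) := b(v) + Σ_{u ∈ F \ W} m v u for v ∈ W. Then μ̃₁(F, m, b) ≤ μ̃₁(W, m_W, b_W). -/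

import Mathlib

/-!
Extension by zero maps nonzero test functions on `W` to nonzero test functions on `F` and preserves
both `∑ g²` and the energy: an edge from `v ∈ W` to `u ∉ W` contributes `m v u * (g v)²`, which is
exactly the extra killing at `v`, the factor `1/2` being absorbed by the two orders `(u, v)`,
`(v, u)`. Hence every Rayleigh quotient of the restricted network is one of the full network. As
the quotients are bounded below by `0` and those of `W` form a nonempty set, the infima compare.
-/

open Finset

/-- The combinatorial (unweighted) first Dirichlet eigenvalue of a killed
face-dual network: vertices `F`, conductances `m`, killing weights `b`;
`μ̃₁ = inf { E(g) / ∑ g² : g ≢ 0 }`, where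
`E(g) = (1/2) ∑_{u,v} m u v (g u − g v)² + ∑_v b v (g v)²`. -/
noncomputable def killedDualMu {F : Type*} [Fintype F]
    (m : F → F → ℕ) (b : F → ℕ) : ℝ :=
  sInf { r : ℝ | ∃ g : F → ℝ, g ≠ 0 ∧
    r = ((1 / 2) * ∑ u, ∑ v, (m u v : ℝ) * (g u - g v) ^ 2
          + ∑ v, (b v : ℝ) * (g v) ^ 2)
        / ∑ v, (g v) ^ 2 }

/-- Energy of a function vanishing off `W`, as the energy of the network restricted to `W`. -/
lemma energy_eq_of_vanish_off {F : Type*} [Fintype F] [DecidableEq F]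
    (m : F → F → ℕ) (hsymm : ∀ u v, m u v = m v u) (b : F → ℕ)
    (W : Finset F) (h : F → ℝ) (h0 : ∀ v ∈ Wᶜ, h v = 0) :
    (1 / 2) * ∑ u, ∑ v, (m u v : ℝ) * (h u - h v) ^ 2 + ∑ v, (b v : ℝ) * (h v) ^ 2
      = (1 / 2) * ∑ u ∈ W, ∑ v ∈ W, (m u v : ℝ) * (h u - h v) ^ 2
        + ∑ v ∈ W, ((b v + ∑ u ∈ Wᶜ, m v u : ℕ) : ℝ) * (h v) ^ 2 := by
  have hb : ∑ v, (b v : ℝ) * (h v) ^ 2 = ∑ v ∈ W, (b v : ℝ) * (h v) ^ 2 := by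
    rw [← Finset.sum_add_sum_compl W,
      Finset.sum_eq_zero (s := Wᶜ) (fun v hv => by simp [h0 v hv]), add_zero]
  have hout : ∀ u ∈ W, ∑ v, (m u v : ℝ) * (h u - h v) ^ 2
      = ∑ v ∈ W, (m u v : ℝ) * (h u - h v) ^ 2 + ∑ v ∈ Wᶜ, (m u v : ℝ) * (h u) ^ 2 := by
    intro u _
    rw [← Finset.sum_add_sum_compl W]
    congr 1
    exact Finset.sum_congr rfl fun v hv => by rw [h0 v hv, sub_zero]
  have hin : ∀ u ∈ Wᶜ, ∑ v, (m u v : ℝ) * (h u - h v) ^ 2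
      = ∑ v ∈ W, (m v u : ℝ) * (h v) ^ 2 := by
    intro u hu
    rw [← Finset.sum_add_sum_compl W,
      Finset.sum_eq_zero (s := Wᶜ) (fun v hv => by simp [h0 v hv, h0 u hu]), add_zero]
    exact Finset.sum_congr rfl fun v _ => by rw [h0 u hu, hsymm u v]; ring
  rw [hb, ← Finset.sum_add_sum_compl W (fun u => ∑ v, (m u v : ℝ) * (h u - h v) ^ 2),
    Finset.sum_congr rfl hout, Finset.sum_congr rfl hin, Finset.sum_add_distrib,
    Finset.sum_comm (s := Wᶜ)]
  simp only [Nat.cast_add, Nat.cast_sum, add_mul, Finset.sum_add_distrib, Finset.sum_mul]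
  ring

/-- **Subdiagram monotonicity of the killed face-dual Dirichlet eigenvalue.**
Let `F` be a finite nonempty type, `m : F → F → ℕ` symmetric, `b : F → ℕ`.
For a nonempty subset `W ⊆ F`, restrict the network to `W` by keeping the
conductances within `W` and converting conductances leaving `W` into extra
killing: `b_W(v) = b v + ∑_{u ∉ W} m v u`.  Then
`μ̃₁(F, m, b) ≤ μ̃₁(W, m_W, b_W)`. -/
theorem killed_dual_mu_subnetwork_monotone
    {F : Type*} [Fintype F] [DecidableEq F] [Nonempty F]
    (m : F → F → ℕ) (hsymm : ∀ u v, m u v = m v u) (b : F → ℕ)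
    (W : Finset F) (hW : W.Nonempty) :
    killedDualMu m b
      ≤ killedDualMu (fun u v : ↥W => m ↑u ↑v)
          (fun v : ↥W => b ↑v + ∑ u ∈ Wᶜ, m ↑v u) := by
  unfold killedDualMu
  apply csInf_le_csInf
  · refine ⟨0, ?_⟩
    rintro r ⟨g, -, rfl⟩
    positivity
  · obtain ⟨w, hw⟩ := hW
    exact ⟨_, fun _ => 1, fun hc => one_ne_zero (congrFun hc ⟨w, hw⟩), rfl⟩
  · rintro r ⟨g, hg, rfl⟩
    obtain ⟨h, hh, h0⟩ : ∃ h : F → ℝ, (∀ v : ↥W, g v = h v) ∧ ∀ v ∈ Wᶜ, h v = 0 :=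
      ⟨fun v => if hv : v ∈ W then g ⟨v, hv⟩ else 0, fun v => by simp,
        fun v hv => by simp [Finset.mem_compl.mp hv]⟩
    refine ⟨h, fun hc => hg (funext fun v => by simp [hh, hc]), ?_⟩
    have hsq : ∑ v, (h v) ^ 2 = ∑ v ∈ W, (h v) ^ 2 := by
      rw [← Finset.sum_add_sum_compl W,
        Finset.sum_eq_zero (s := Wᶜ) (fun v hv => by simp [h0 v hv]), add_zero]
    rw [energy_eq_of_vanish_off m hsymm b W h h0, hsq]
    simp only [hh]
    -- Sums over the subtype `↥W` become sums over the finset `W`.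
    rw [Finset.sum_coe_sort W (fun v => (h v) ^ 2),
      Finset.sum_coe_sort W (fun v => ((b v + ∑ u ∈ Wᶜ, m v u : ℕ) : ℝ) * (h v) ^ 2),
      ← Finset.sum_coe_sort W (fun u => ∑ v ∈ W, (m u v : ℝ) * (h u - h v) ^ 2)]
    simp only [← Finset.sum_coe_sort W (fun v => (m _ v : ℝ) * (h _ - h v) ^ 2)]
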